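/- Let R be a noetherian normal integral domain with fraction field K and let A be a finite flat R-algebra with split generic fiber A^K. For each simple A^K-module S, let Ω_S: Z(A^K) → K be its central character (z ∈ Z(A^K) acts on S by the scalar Ω_S(z)); its restriction to Z(A) takes values in R, giving an R-algebra morphism Ω'_S: Z(A) → R. Then for any p ∈ Spec(R), two simple A^K-modules S and T lie in the same p-family (i.e., they belong to the same block of A_p) if and only if Ω'_S(z) ≡ Ω'_T(z) mod p for all z ∈ Z(A). Consequently, if z_1, …, z_n generate Z(A) as an R-algebra and F, F' are two distinct blocks of A^K with central characters Ω_F, Ω_{F'}, then the gluing locus {p ∈ Spec(R) : F and F' lie in the same block of A_p} equals the zero locus V({Ω_F(z_i) − Ω_{F'}(z_i) : i = 1, …, n}). -/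

import Mathlib

open TensorProduct

section BlockDefs
variable {B : Type*} [Ring B]

def IsBlockIdemOn (S : Set B) (e : B) : Prop :=
  e ∈ S ∧ IsIdempotentElem e ∧ e ≠ 0 ∧ (∀ x ∈ S, e * x = x * e) ∧
    ∀ f g : B, f ∈ S → g ∈ S → (∀ x ∈ S, f * x = x * f) → (∀ x ∈ S, g * x = x * g) →
      IsIdempotentElem f → IsIdempotentElem g → f * g = 0 → f + g = e → f = 0 ∨ g = 0

def IsBlockIdem (e : B) : Prop := IsBlockIdemOn Set.univ e

end BlockDefs

def IsSplitAlgebra (K : Type u) (B : Type v) [Field K] [Ring B] [Algebra K B] : Prop :=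
  ∀ (S : Type v) [AddCommGroup S] [Module B S], IsSimpleModule B S →
    ∀ f : S →ₗ[B] S, ∃ k : K, ∀ s : S, f s = algebraMap K B k • s

/-- The subring `A_p` of `A^K = K ⊗[R] A`. -/
def localizedAt (R : Type u) [CommRing R] [IsDomain R] (A : Type u) [Ring A] [Algebra R A]
    (p : PrimeSpectrum R) : Set (FractionRing R ⊗[R] A) :=
  {x | ∃ (a : A) (s : R), s ∉ p.asIdeal ∧ s • x = Algebra.TensorProduct.includeRight a}

/-!
A central element `z` of a split algebra acts by a scalar on every simple module, so its minimal
polynomial over `K` is a product of linear factors; when `z` comes from `Z(A)`, the roots are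
integral over `R`, hence lie in the normal domain `R`. If two of the roots, say `Ω_S(z)` and
`Ω_T(z)`, differ modulo `p`, group the linear factors as `g * h`, where `g` collects the roots
congruent to `Ω_S(z)`. The resultant of `g` and `h` lies outside `p`, so `u * g + v * h = d` with
`d ∉ p`, and `d⁻¹ (v * h)(z)` is a central idempotent of `A_p` acting as `1` on `S` and `0` on `T`:
no block of `A_p` contains both. Conversely, a central idempotent `e = a / s` of `A_p` acts by
`Ω(a) / s ∈ {0, 1}` on `S` and on `T`, and when `Ω_S ≡ Ω_T` modulo `p` the two values agree, because
`s ∉ p`.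
-/

open Polynomial

section Polynomial

variable {R : Type*} [CommRing R] [IsDomain R] {p : Ideal R}

lemma resultant_notMem_of_forall_roots_sub_notMem (hp : p.IsPrime) {g h : R[X]}
    (hg : g.Monic) (hgs : g.Splits) (hh : h.Monic) (hhs : h.Splits)
    (hgh : ∀ a ∈ g.roots, ∀ b ∈ h.roots, a - b ∉ p) : g.resultant h ∉ p := by
  rw [resultant_eq_prod_eval g h h.natDegree le_rfl hgs, hg.leadingCoeff, one_pow, one_mul,
    hp.multiset_prod_mem_iff_exists_mem]
  rintro ⟨_, hc, hcp⟩
  obtain ⟨a, ha, rfl⟩ := Multiset.mem_map.1 hc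
  rw [hhs.eval_eq_prod_roots_of_monic hh, hp.multiset_prod_mem_iff_exists_mem] at hcp
  obtain ⟨_, hc, hcp⟩ := hcp
  obtain ⟨b, hb, rfl⟩ := Multiset.mem_map.1 hc
  exact hgh a ha b hb hcp

lemma exists_mul_eq_of_splits {P : R[X]} (hP : P.Monic) (hPs : P.Splits) (φ : R → Prop) :
    ∃ g h : R[X], g * h = P ∧ (g.Monic ∧ g.Splits ∧ ∀ a ∈ g.roots, φ a) ∧
      h.Monic ∧ h.Splits ∧ ∀ b ∈ h.roots, ¬ φ b := by
  classical
  have monic_splits_roots (m : Multiset R) :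
      (m.map (X - C ·)).prod.Monic ∧ (m.map (X - C ·)).prod.Splits ∧
        (m.map (X - C ·)).prod.roots = m :=
    ⟨monic_multiset_prod_of_monic _ _ fun a _ ↦ monic_X_sub_C a,
      .multisetProd fun _ hf ↦ by obtain ⟨a, -, rfl⟩ := Multiset.mem_map.1 hf; exact .X_sub_C a,
      roots_multiset_prod_X_sub_C m⟩
  obtain ⟨hg, hgs, hgr⟩ := monic_splits_roots (P.roots.filter φ)
  obtain ⟨hh, hhs, hhr⟩ := monic_splits_roots (P.roots.filter (¬ φ ·))
  refine ⟨_, _, ?_, ⟨hg, hgs, fun a ha ↦ ?_⟩, hh, hhs, fun b hb ↦ ?_⟩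
  · rw [← Multiset.prod_add, ← Multiset.map_add, Multiset.filter_add_not,
      ← hPs.eq_prod_roots_of_monic hP]
  · exact (Multiset.mem_filter.1 (hgr ▸ ha)).2
  · exact (Multiset.mem_filter (p := (¬ φ ·)).1 (hhr ▸ hb)).2

lemma exists_dvd_mul_self_sub_C_mul (hp : p.IsPrime) {P : R[X]} (hP : P.Monic) (hPs : P.Splits)
    {α β : R} (hα : P.IsRoot α) (hβ : P.IsRoot β) (hαβ : α - β ∉ p) :
    ∃ (Q : R[X]) (d : R), d ∉ p ∧ P ∣ Q * Q - C d * Q ∧ Q.eval α = d ∧ Q.eval β = 0 := by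
  obtain ⟨g, h, rfl, ⟨hg, hgs, hgr⟩, hh, hhs, hhr⟩ :=
    exists_mul_eq_of_splits hP hPs (α - · ∈ p)
  have hgα : g.eval α = 0 := by
    refine (root_mul.1 hα).resolve_right fun hhα ↦ hhr α ((mem_roots hh.ne_zero).2 hhα) ?_
    simp only [sub_self, zero_mem]
  have hhβ : h.eval β = 0 :=
    (root_mul.1 hβ).resolve_left fun hgβ ↦ hαβ (hgr β ((mem_roots hg.ne_zero).2 hgβ))
  have hres : g.resultant h ∉ p := by
    refine resultant_notMem_of_forall_roots_sub_notMem hp hg hgs hh hhs fun a ha b hb hab ↦ ?_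
    exact hhr b hb (by simpa only [sub_add_sub_cancel] using add_mem (hgr a ha) hab)
  have hdeg : g.natDegree ≠ 0 :=
    (natDegree_pos_of_eval₂_root hg.ne_zero (RingHom.id R) hgα fun _ ↦ id).ne'
  obtain ⟨u, v, -, -, huv⟩ :=
    exists_mul_add_mul_eq_C_resultant g h le_rfl le_rfl (.inl hdeg)
  refine ⟨h * v, g.resultant h, hres, ⟨-(u * v), ?_⟩, ?_, ?_⟩
  · rw [← huv]
    ring
  · simpa [hgα] using congrArg (eval α) huv
  · rw [eval_mul, hhβ, zero_mul]

end Polynomial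

/-- The element `b` of the `R`-algebra `B` acts on the `B`-module `S` as multiplication by the
scalar `r : R`. It is phrased through `algebraMap` because `S` carries only a `B`-module
structure. -/
def ActsAsScalar {R B : Type*} [CommRing R] [Ring B] [Algebra R B] (S : Type*) [AddCommGroup S]
    [Module B S] (b : B) (r : R) : Prop :=
  ∀ x : S, b • x = algebraMap R B r • x

namespace ActsAsScalar

section CommRing

variable {R B S : Type*} [CommRing R] [Ring B] [Algebra R B] [AddCommGroup S] [Module B S]
  {b b' : B} {r r' : R}

lemma of_algebraMap (r : R) : ActsAsScalar S (algebraMap R B r) r := fun _ ↦ rfl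

lemma add (h : ActsAsScalar S b r) (h' : ActsAsScalar S b' r') :
    ActsAsScalar S (b + b') (r + r') := fun x ↦ by
  rw [add_smul, h, h', map_add, add_smul]

lemma mul (h : ActsAsScalar S b r) (h' : ActsAsScalar S b' r') :
    ActsAsScalar S (b * b') (r * r') := fun x ↦ by
  rw [mul_smul, h', h, map_mul, mul_smul]

lemma smul (c : R) (h : ActsAsScalar S b r) : ActsAsScalar S (c • b) (c * r) := by
  rw [Algebra.smul_def]
  exact (of_algebraMap c).mul h

lemma aeval (h : ActsAsScalar S b r) (P : R[X]) : ActsAsScalar S (aeval b P) (P.eval r) := by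
  intro x
  obtain ⟨Q, hQ⟩ := X_sub_C_dvd_sub_C_eval (a := r) (p := P)
  have hbx : (b - algebraMap R B r) • x = 0 := by rw [sub_smul, h, sub_self]
  rw [← sub_eq_zero, ← sub_smul, ← aeval_C b, ← map_sub, hQ, mul_comm, map_mul, map_sub, aeval_X,
    aeval_C, mul_smul, hbx, smul_zero]

lemma baseChange (K : Type*) [CommRing K] [Algebra R K] [Algebra K B] [IsScalarTower R K B]
    (h : ActsAsScalar S b r) : ActsAsScalar S b (algebraMap R K r) := fun x ↦ by
  rw [h, IsScalarTower.algebraMap_apply R K B]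

end CommRing

section Field

variable {K B S : Type*} [Field K] [Ring B] [Algebra K B] [AddCommGroup S] [Module B S]
  [Nontrivial S] {b e : B} {k k' : K}

lemma unique_of_field (h : ActsAsScalar S b k) (h' : ActsAsScalar S b k') : k = k' := by
  by_contra hne
  obtain ⟨x, hx⟩ := exists_ne (0 : S)
  have hunit : IsUnit (algebraMap K B (k - k')) :=
    (isUnit_iff_ne_zero.2 (sub_ne_zero.2 hne)).map _
  refine hx (hunit.smul_eq_zero.1 ?_)
  rw [map_sub, sub_smul, ← h, ← h', sub_self]

lemma eq_zero_or_eq_one (he : IsIdempotentElem e) (h : ActsAsScalar S e k) : k = 0 ∨ k = 1 :=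
  IsIdempotentElem.iff_eq_zero_or_one.1 ((he.eq ▸ h.mul h).unique_of_field h)

end Field

section FractionField

variable {R B S : Type*} [CommRing R] [Ring B] [Algebra R B] [AddCommGroup S] [Module B S]
  [Nontrivial S]

lemma unique (K : Type*) [Field K] [Algebra R K] [FaithfulSMul R K] [Algebra K B]
    [IsScalarTower R K B] {b : B} {r r' : R} (h : ActsAsScalar S b r)
    (h' : ActsAsScalar S b r') : r = r' :=
  FaithfulSMul.algebraMap_injective R K ((h.baseChange K).unique_of_field (h'.baseChange K))

lemma isRoot_of_aeval_eq_zero (K : Type*) [Field K] [Algebra R K] [FaithfulSMul R K] [Algebra K B]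
    [IsScalarTower R K B] {b : B} {r : R} (h : ActsAsScalar S b r) {P : R[X]}
    (hP : Polynomial.aeval b P = 0) : P.IsRoot r := by
  refine (h.aeval P).unique K fun x ↦ ?_
  rw [hP, map_zero]

lemma eq_zero_or_eq_of_smul (K : Type*) [Field K] [Algebra R K] [FaithfulSMul R K] [Algebra K B]
    [IsScalarTower R K B] {e : B} (he : IsIdempotentElem e) {s c : R} (hs : s ≠ 0)
    (h : ActsAsScalar S (s • e) c) :
    (c = 0 ∧ ∀ x : S, e • x = 0) ∨ (c = s ∧ ∀ x : S, e • x = x) := by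
  have hsK : algebraMap R K s ≠ 0 := by
    rwa [Ne, FaithfulSMul.algebraMap_eq_zero_iff]
  have heK : ActsAsScalar S e ((algebraMap R K s)⁻¹ * algebraMap R K c) := by
    have := (h.baseChange K).smul (algebraMap R K s)⁻¹
    rwa [← algebraMap_smul K s e, inv_smul_smul₀ hsK] at this
  refine (heK.eq_zero_or_eq_one he).imp (fun h0 ↦ ⟨?_, fun x ↦ ?_⟩) fun h1 ↦ ⟨?_, fun x ↦ ?_⟩
  · simpa [hsK] using h0
  · rw [heK, h0, map_zero, zero_smul]
  · exact FaithfulSMul.algebraMap_injective R K ((inv_mul_eq_one₀ hsK).1 h1).symm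
  · rw [heK, h1, map_one, one_smul]

end FractionField

lemma exists_sub_mem_of_mem_adjoin {R B S T : Type*} [CommRing R] [Ring B] [Algebra R B]
    [AddCommGroup S] [Module B S] [AddCommGroup T] [Module B T] {I : Ideal R} {Z : Set B}
    (hZ : ∀ z ∈ Z, ∃ c d : R, ActsAsScalar S z c ∧ ActsAsScalar T z d ∧ c - d ∈ I) {b : B}
    (hb : b ∈ Algebra.adjoin R Z) :
    ∃ c d : R, ActsAsScalar S b c ∧ ActsAsScalar T b d ∧ c - d ∈ I := by
  induction hb using Algebra.adjoin_induction with
  | mem z hz => exact hZ z hz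
  | algebraMap r =>
    exact ⟨r, r, .of_algebraMap r, .of_algebraMap r, by simp only [sub_self, zero_mem]⟩
  | add x y _ _ ihx ihy =>
    obtain ⟨c, d, hc, hd, hcd⟩ := ihx
    obtain ⟨c', d', hc', hd', hcd'⟩ := ihy
    exact ⟨c + c', d + d', hc.add hc', hd.add hd', add_sub_add_comm c c' d d' ▸ add_mem hcd hcd'⟩
  | mul x y _ _ ihx ihy =>
    obtain ⟨c, d, hc, hd, hcd⟩ := ihx
    obtain ⟨c', d', hc', hd', hcd'⟩ := ihy
    exact ⟨c * c', d * d', hc.mul hc', hd.mul hd', I.mul_sub_mul_mem hcd hcd'⟩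

end ActsAsScalar

namespace IsSplitAlgebra

variable {K : Type u} {B : Type v} [Field K] [Ring B] [Algebra K B]

lemma exists_actsAsScalar_of_mem_center (hB : IsSplitAlgebra K B) {z : B}
    (hz : z ∈ Set.center B) (S : Type v) [AddCommGroup S] [Module B S] [IsSimpleModule B S] :
    ∃ k : K, ActsAsScalar S z k :=
  hB S inferInstance
    { toFun := (z • ·)
      map_add' := smul_add z
      map_smul' := fun b x ↦ by
        rw [RingHom.id_apply, smul_smul, smul_smul, (Set.mem_center_iff.1 hz).comm b] }

lemma exists_isRoot_of_span_aeval_ne_top (hB : IsSplitAlgebra K B) {z : B}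
    (hz : z ∈ Set.center B) {f : K[X]} (hf : Ideal.span {aeval z f} ≠ ⊤) :
    ∃ k : K, f.IsRoot k := by
  obtain ⟨M, hM, hfM⟩ := Ideal.exists_le_maximal _ hf
  have : IsSimpleModule B (B ⧸ M) := isSimpleModule_iff_isCoatom.2 hM.out
  have := IsSimpleModule.nontrivial B (B ⧸ M)
  obtain ⟨k, hk⟩ := hB.exists_actsAsScalar_of_mem_center hz (B ⧸ M)
  refine ⟨k, ?_⟩
  by_contra hroot
  have hunit : IsUnit (algebraMap K B (f.eval k)) := (isUnit_iff_ne_zero.2 hroot).map _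
  have hkill : aeval z f • (Submodule.Quotient.mk 1 : B ⧸ M) = 0 := by
    rw [← Submodule.Quotient.mk_smul, Submodule.Quotient.mk_eq_zero, smul_eq_mul, mul_one]
    exact hfM (Ideal.mem_span_singleton_self _)
  rw [hk.aeval, hunit.smul_eq_zero, Submodule.Quotient.mk_eq_zero] at hkill
  exact hM.ne_top (M.eq_top_iff_one.2 hkill)

lemma minpoly_splits_of_mem_center (hB : IsSplitAlgebra K B) {z : B} (hz : z ∈ Set.center B)
    (hint : IsIntegral K z) : (minpoly K z).Splits := by
  have hm : minpoly K z ≠ 0 := minpoly.ne_zero hint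
  obtain ⟨u, hu⟩ := UniqueFactorizationMonoid.factors_prod hm
  rw [← hu]
  refine (Splits.multisetProd fun g hg ↦ ?_).mul u.isUnit.splits
  have hirr := UniqueFactorizationMonoid.irreducible_of_factor g hg
  obtain ⟨c, hc⟩ := UniqueFactorizationMonoid.dvd_of_mem_factors hg
  have hspan : Ideal.span {aeval z g} ≠ ⊤ := by
    intro htop
    obtain ⟨y, hy⟩ := Ideal.mem_span_singleton'.1 ((Ideal.eq_top_iff_one _).1 htop)
    have hcz : aeval z c = 0 := by
      rw [← one_mul (aeval z c), ← hy, mul_assoc, ← map_mul, ← hc, minpoly.aeval, mul_zero]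
    have hdvd : g * c ∣ 1 * c := by
      rw [← hc, one_mul]
      exact minpoly.dvd K z hcz
    have hc0 : c ≠ 0 := right_ne_zero_of_mul (hc ▸ hm)
    exact hirr.not_isUnit (isUnit_of_dvd_one ((mul_dvd_mul_iff_right hc0).1 hdvd))
  obtain ⟨k, hk⟩ := hB.exists_isRoot_of_span_aeval_ne_top hz hspan
  exact .of_degree_eq_one (degree_eq_one_of_irreducible_of_root hirr hk)

lemma exists_monic_splits_aeval_eq_zero (hB : IsSplitAlgebra K B) {R : Type*} [CommRing R]
    [IsIntegrallyClosed R] [Algebra R K] [IsFractionRing R K] [Algebra R B]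
    [IsScalarTower R K B] {z : B} (hz : z ∈ Set.center B) (hint : IsIntegral R z) :
    ∃ P : R[X], P.Monic ∧ P.Splits ∧ aeval z P = 0 := by
  have hintK : IsIntegral K z := hint.tower_top
  have hsplits := hB.minpoly_splits_of_mem_center hz hintK
  have hinj := IsFractionRing.injective R K
  have hroots : ∀ k ∈ (minpoly K z).roots, k ∈ (algebraMap R K).range := by
    intro k hk
    refine IsIntegrallyClosed.isIntegral_iff.1 ⟨minpoly R z, minpoly.monic hint, ?_⟩
    rw [eval₂_eq_eval_map]
    exact eval_eq_zero_of_dvd_of_eval_eq_zero (minpoly.dvd_map_of_isScalarTower R K z)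
      (isRoot_of_mem_roots hk)
  obtain ⟨P, hP⟩ :=
    hsplits.mem_lift_of_roots_mem_range (minpoly.monic hintK) (algebraMap R K) hroots
  rw [coe_mapRingHom] at hP
  refine ⟨P, monic_of_injective hinj (hP ▸ minpoly.monic hintK), ?_, ?_⟩
  · exact .of_splits_map_of_injective hinj (hP ▸ hsplits) (hP ▸ hroots)
  · rw [← aeval_map_algebraMap K, hP, minpoly.aeval]

lemma exists_isIdempotentElem_of_sub_notMem (hB : IsSplitAlgebra K B) {R : Type*} [CommRing R]
    [IsDomain R] [IsIntegrallyClosed R] [Algebra R K] [IsFractionRing R K] [Algebra R B]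
    [IsScalarTower R K B] {S T : Type*} [AddCommGroup S] [Module B S] [Nontrivial S]
    [AddCommGroup T] [Module B T] [Nontrivial T] {p : Ideal R} (hp : p.IsPrime) {z : B}
    (hz : z ∈ Set.center B) (hint : IsIntegral R z) {α β : R} (hα : ActsAsScalar S z α)
    (hβ : ActsAsScalar T z β) (hαβ : α - β ∉ p) :
    ∃ (e : B) (d : R), d ∉ p ∧ d • e ∈ Algebra.adjoin R {z} ∧ IsIdempotentElem e ∧
      e ∈ Set.center B ∧ (∀ x : S, e • x = x) ∧ ∀ x : T, e • x = 0 := by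
  obtain ⟨P, hP, hPs, hPz⟩ := hB.exists_monic_splits_aeval_eq_zero hz hint
  obtain ⟨Q, d, hd, hdvd, hQα, hQβ⟩ := exists_dvd_mul_self_sub_C_mul hp hP hPs
    (hα.isRoot_of_aeval_eq_zero K hPz) (hβ.isRoot_of_aeval_eq_zero K hPz) hαβ
  have hd0 : d ≠ 0 := fun h0 ↦ hd (h0 ▸ p.zero_mem)
  have hdK : algebraMap R K d ≠ 0 := by rwa [Ne, FaithfulSMul.algebraMap_eq_zero_iff]
  have hQQ : aeval z Q * aeval z Q = algebraMap R K d • aeval z Q := by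
    have h0 : aeval z (Q * Q - C d * Q) = 0 := aeval_eq_zero_of_dvd_aeval_eq_zero hdvd hPz
    rwa [map_sub, map_mul, map_mul, aeval_C, ← Algebra.smul_def, sub_eq_zero,
      ← algebraMap_smul K d] at h0
  have hQz : aeval z Q ∈ Algebra.adjoin R {z} := aeval_mem_adjoin_singleton R z
  have hQc : aeval z Q ∈ Subalgebra.center R B :=
    Algebra.adjoin_le (Set.singleton_subset_iff.2 hz) hQz
  obtain ⟨e, he⟩ : ∃ e : B, algebraMap R K d • e = aeval z Q := ⟨_, smul_inv_smul₀ hdK _⟩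
  have hde : d • e = aeval z Q := by rw [← he, algebraMap_smul]
  have hei : IsIdempotentElem e := by
    rw [← he, smul_mul_smul_comm, smul_smul] at hQQ
    exact smul_right_injective B (mul_ne_zero hdK hdK) hQQ
  have hec : e ∈ Subalgebra.center K B := by
    rw [← inv_smul_smul₀ hdK e, he]
    exact Subalgebra.smul_mem _ (show aeval z Q ∈ Subalgebra.center K B from hQc) _
  refine ⟨e, d, hd, hde ▸ hQz, hei, hec, ?_, ?_⟩
  · have hS : ActsAsScalar S (d • e) d := hde ▸ hQα ▸ hα.aeval Q
    exact ((hS.eq_zero_or_eq_of_smul K hei hd0).resolve_left fun h ↦ hd0 h.1).2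
  · have hT : ActsAsScalar T (d • e) (0 : R) := hde ▸ hQβ ▸ hβ.aeval Q
    exact ((hT.eq_zero_or_eq_of_smul K hei hd0).resolve_right fun h ↦ hd0 h.1.symm).2

end IsSplitAlgebra

section BlockIdempotents

variable {B : Type*} [Ring B]

lemma IsBlockIdemOn.mul_eq_zero_or_mul_eq_self {σ : Type*} [SetLike σ B]
    [NonUnitalSubringClass σ B] {L : σ} {e f : B} (he : IsBlockIdemOn (L : Set B) e)
    (hfL : f ∈ L) (hf : IsIdempotentElem f) (hfc : ∀ x ∈ L, f * x = x * f) :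
    e * f = 0 ∨ e * f = e := by
  obtain ⟨heL, hei, -, hec, hprim⟩ := he
  have hefc : ∀ x ∈ (L : Set B), e * f * x = x * (e * f) := fun x hx ↦ by
    rw [mul_assoc, hfc x hx, ← mul_assoc, hec x hx, mul_assoc]
  have hef : IsIdempotentElem (e * f) := hei.mul_of_commute (hec f hfL) hf
  have heef : e * (e * f) = e * f := hei.mul_self_mul f
  have hefe : e * f * e = e * f := (hefc e heL).trans heef
  refine (hprim (e * f) (e - e * f) (mul_mem heL hfL) (sub_mem heL (mul_mem heL hfL)) hefc
    (fun x hx ↦ ?_) hef ?_ ?_ ?_).imp_right fun h ↦ (sub_eq_zero.1 h).symm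
  · rw [sub_mul, mul_sub, hec x hx, hefc x hx]
  · exact hef.sub hei hefe heef
  · rw [mul_sub, hefe, hef.eq, sub_self]
  · exact add_sub_cancel _ _

lemma exists_isBlockIdemOn_smul_eq_self [IsArtinianRing B] {S : Type*} [AddCommGroup S]
    [Module B S] [Nontrivial S] {L : Set B} (hL : 1 ∈ L)
    (hact : ∀ e ∈ L, IsIdempotentElem e → (∀ x ∈ L, e * x = x * e) →
      (∀ x : S, e • x = 0) ∨ ∀ x : S, e • x = x) :
    ∃ e, IsBlockIdemOn L e ∧ ∀ x : S, e • x = x := by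
  obtain ⟨e, ⟨heL, hei, hec, heS⟩, hmin⟩ := exists_minimalFor_of_wellFoundedLT
    (fun e : B ↦ e ∈ L ∧ IsIdempotentElem e ∧ (∀ x ∈ L, e * x = x * e) ∧ ∀ x : S, e • x = x)
    (fun e ↦ Ideal.span {e}) ⟨1, hL, .one, by simp, one_smul B⟩
  have complement_eq_zero {f g : B} (hf : f ∈ L) (hfc : ∀ x ∈ L, f * x = x * f)
      (hfi : IsIdempotentElem f) (hgi : IsIdempotentElem g) (hfg : f * g = 0) (hsum : f + g = e)
      (hfS : ∀ x : S, f • x = x) : g = 0 := by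
    have hfe : f * e = f := by rw [← hsum, mul_add, hfi.eq, hfg, add_zero]
    have hle : Ideal.span {f} ≤ Ideal.span {e} :=
      (Ideal.span_singleton_le_iff_mem _).2 (Ideal.mem_span_singleton'.2 ⟨f, hfe⟩)
    obtain ⟨y, hy⟩ := Ideal.mem_span_singleton'.1
      (hmin ⟨hf, hfi, hfc, hfS⟩ hle (Ideal.mem_span_singleton_self e))
    calc g = e * g := by rw [← hsum, add_mul, hfg, hgi.eq, zero_add]
      _ = 0 := by rw [← hy, mul_assoc, hfg, mul_zero]
  refine ⟨e, ⟨heL, hei, ?_, hec, ?_⟩, heS⟩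
  · rintro rfl
    obtain ⟨x, hx⟩ := exists_ne (0 : S)
    exact hx (by rw [← heS x, zero_smul])
  · intro f g hf hg hfc hgc hfi hgi hfg hsum
    rcases hact f hf hfi hfc with hf0 | hf1
    · have hg1 : ∀ x : S, g • x = x := fun x ↦ by
        simpa only [← hsum, add_smul, hf0, zero_add] using heS x
      exact .inl (complement_eq_zero hg hgc hgi hfi (hgc f hf ▸ hfg) (add_comm f g ▸ hsum) hg1)
    · exact .inr (complement_eq_zero hf hfc hfi hgi hfg hsum hf1)

end BlockIdempotents

section LocalizedAlgebra

variable {R A : Type u} [CommRing R] [Ring A] [Algebra R A]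

lemma includeRight_fractionRing_injective [Module.IsTorsionFree R A] :
    Function.Injective (Algebra.TensorProduct.includeRight : A →ₐ[R] FractionRing R ⊗[R] A) :=
  (IsLocalizedModule.injective_iff_isRegular (nonZeroDivisors R)
    (TensorProduct.mk R (FractionRing R) A 1)).2 fun c ↦
      Module.IsTorsionFree.isSMulRegular (isRegular_iff_mem_nonZeroDivisors.2 c.2)

lemma includeRight_mem_center {z : A} (hz : z ∈ Set.center A) :
    (Algebra.TensorProduct.includeRight z : FractionRing R ⊗[R] A) ∈
      Set.center (FractionRing R ⊗[R] A) :=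
  Algebra.TensorProduct.includeRight_map_center_le R (FractionRing R) A ⟨z, hz, rfl⟩

variable [IsDomain R] {p : PrimeSpectrum R}

variable (R A p) in
/-- The set `localizedAt R A p` as an `R`-subalgebra of the generic fiber. -/
def localizedSubalgebra : Subalgebra R (FractionRing R ⊗[R] A) where
  carrier := localizedAt R A p
  mul_mem' := by
    rintro x y ⟨a, s, hs, hx⟩ ⟨b, t, ht, hy⟩
    exact ⟨a * b, s * t, p.isPrime.mul_notMem hs ht, by
      rw [map_mul, ← hx, ← hy, smul_mul_smul_comm]⟩
  add_mem' := by
    rintro x y ⟨a, s, hs, hx⟩ ⟨b, t, ht, hy⟩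
    exact ⟨t • a + s • b, s * t, p.isPrime.mul_notMem hs ht, by
      rw [map_add, map_smul, map_smul, ← hx, ← hy, smul_add, smul_smul, smul_smul, mul_comm t]⟩
  algebraMap_mem' r := ⟨algebraMap R A r, 1, p.isPrime.one_notMem, by
    rw [one_smul, AlgHom.commutes]⟩

lemma includeRight_mem_localizedAt (a : A) :
    Algebra.TensorProduct.includeRight a ∈ localizedAt R A p :=
  ⟨a, 1, p.isPrime.one_notMem, one_smul R _⟩

lemma exists_mem_center_smul_eq_includeRight [Module.IsTorsionFree R A]
    {x : FractionRing R ⊗[R] A} (hx : x ∈ localizedAt R A p)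
    (hxc : ∀ y ∈ localizedAt R A p, x * y = y * x) :
    ∃ a ∈ Set.center A, ∃ s ∉ p.asIdeal, s • x = Algebra.TensorProduct.includeRight a := by
  obtain ⟨a, s, hs, hsx⟩ := hx
  refine ⟨a, Semigroup.mem_center_iff.2 fun b ↦ includeRight_fractionRing_injective (R := R) ?_,
    s, hs, hsx⟩
  rw [map_mul, map_mul, ← hsx, smul_mul_assoc, mul_smul_comm,
    hxc _ (includeRight_mem_localizedAt b)]

end LocalizedAlgebra

/-- `χ` restricts on `Z(A)` to the central character of the module `S` over the generic fiber of
`A`. The values of `χ` outside `Z(A)` are irrelevant. -/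
def IsCentralCharacter {R A : Type*} [CommRing R] [Ring A] [Algebra R A]
    (S : Type*) [AddCommGroup S] [Module (FractionRing R ⊗[R] A) S] (χ : A → R) : Prop :=
  ∀ z ∈ Set.center A,
    ActsAsScalar S (Algebra.TensorProduct.includeRight z : FractionRing R ⊗[R] A) (χ z)

namespace IsCentralCharacter

variable {R A : Type u} [CommRing R] [IsDomain R] [Ring A] [Algebra R A]
  {S T : Type*} [AddCommGroup S] [Module (FractionRing R ⊗[R] A) S] [Nontrivial S]
  [AddCommGroup T] [Module (FractionRing R ⊗[R] A) T] [Nontrivial T]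
  {χ ψ : A → R} {p : PrimeSpectrum R} {e : FractionRing R ⊗[R] A}

lemma eq_zero_or_eq_of_smul_eq (hχ : IsCentralCharacter S χ) (he : IsIdempotentElem e) {a : A}
    (ha : a ∈ Set.center A) {s : R} (hs : s ∉ p.asIdeal)
    (hsa : s • e = Algebra.TensorProduct.includeRight a) :
    (χ a = 0 ∧ ∀ x : S, e • x = 0) ∨ (χ a = s ∧ ∀ x : S, e • x = x) :=
  (hsa ▸ hχ a ha : ActsAsScalar S (s • e) (χ a)).eq_zero_or_eq_of_smul (FractionRing R) he
    fun h0 ↦ hs (h0 ▸ p.asIdeal.zero_mem)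

lemma smul_eq_zero_or_smul_eq_self [Module.IsTorsionFree R A] (hχ : IsCentralCharacter S χ)
    (heL : e ∈ localizedAt R A p) (he : IsIdempotentElem e)
    (hec : ∀ y ∈ localizedAt R A p, e * y = y * e) :
    (∀ x : S, e • x = 0) ∨ ∀ x : S, e • x = x := by
  obtain ⟨a, ha, s, hs, hsa⟩ := exists_mem_center_smul_eq_includeRight heL hec
  exact (hχ.eq_zero_or_eq_of_smul_eq he ha hs hsa).imp And.right And.right

lemma smul_eq_self_of_sub_mem [Module.IsTorsionFree R A] (hχ : IsCentralCharacter S χ)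
    (hψ : IsCentralCharacter T ψ) (hχψ : ∀ z ∈ Set.center A, χ z - ψ z ∈ p.asIdeal)
    (heL : e ∈ localizedAt R A p) (he : IsIdempotentElem e)
    (hec : ∀ y ∈ localizedAt R A p, e * y = y * e) (heS : ∀ x : S, e • x = x) (x : T) :
    e • x = x := by
  obtain ⟨a, ha, s, hs, hsa⟩ := exists_mem_center_smul_eq_includeRight heL hec
  have hχa : χ a = s := by
    refine ((hχ.eq_zero_or_eq_of_smul_eq he ha hs hsa).resolve_left fun h ↦ ?_).1
    obtain ⟨y, hy⟩ := exists_ne (0 : S)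
    exact hy ((heS y).symm.trans (h.2 y))
  refine ((hψ.eq_zero_or_eq_of_smul_eq he ha hs hsa).resolve_left fun h ↦ hs ?_).2 x
  simpa only [hχa, h.1, sub_zero] using hχψ a ha

lemma exists_isBlockIdemOn_of_sub_mem [Module.Finite R A] [Module.IsTorsionFree R A]
    (hχ : IsCentralCharacter S χ) (hψ : IsCentralCharacter T ψ)
    (hχψ : ∀ z ∈ Set.center A, χ z - ψ z ∈ p.asIdeal) :
    ∃ e, IsBlockIdemOn (localizedAt R A p) e ∧ (∀ x : S, e • x = x) ∧ ∀ x : T, e • x = x := by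
  have : IsArtinianRing (FractionRing R ⊗[R] A) := .of_finite (FractionRing R) _
  obtain ⟨e, he, heS⟩ := exists_isBlockIdemOn_smul_eq_self (S := S)
    (one_mem (localizedSubalgebra R A p)) fun _ ↦ hχ.smul_eq_zero_or_smul_eq_self
  obtain ⟨heL, hei, -, hec, -⟩ := id he
  exact ⟨e, he, heS, hχ.smul_eq_self_of_sub_mem hψ hχψ heL hei hec heS⟩

lemma sub_mem_of_isBlockIdemOn [IsIntegrallyClosed R] [Algebra.IsIntegral R A]
    (hsplit : IsSplitAlgebra (FractionRing R) (FractionRing R ⊗[R] A))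
    (hχ : IsCentralCharacter S χ) (hψ : IsCentralCharacter T ψ)
    (he : IsBlockIdemOn (localizedAt R A p) e) (heS : ∀ x : S, e • x = x)
    (heT : ∀ x : T, e • x = x) {z : A} (hz : z ∈ Set.center A) : χ z - ψ z ∈ p.asIdeal := by
  by_contra hsub
  have hint : IsIntegral R (Algebra.TensorProduct.includeRight z : FractionRing R ⊗[R] A) :=
    (Algebra.IsIntegral.isIntegral z).map _
  obtain ⟨f, d, hd, hdf, hfi, hfc, hfS, hfT⟩ := hsplit.exists_isIdempotentElem_of_sub_notMem
    p.isPrime (includeRight_mem_center hz) hint (hχ z hz) (hψ z hz) hsub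
  have hfL : f ∈ localizedSubalgebra R A p := by
    rw [← Set.image_singleton, ← AlgHom.map_adjoin] at hdf
    obtain ⟨a, -, ha⟩ := hdf
    exact ⟨a, d, hd, ha.symm⟩
  rcases IsBlockIdemOn.mul_eq_zero_or_mul_eq_self (L := localizedSubalgebra R A p) he hfL hfi
    fun x _ ↦ (Set.mem_center_iff.1 hfc).comm x with hef | hef
  · obtain ⟨x, hx⟩ := exists_ne (0 : S)
    rw [← heS x, ← hfS x, smul_smul, hef] at hx
    exact hx (zero_smul (FractionRing R ⊗[R] A) x)
  · obtain ⟨x, hx⟩ := exists_ne (0 : T)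
    exact hx (by rw [← heT x, ← hef, mul_smul, hfT, smul_zero])

lemma sub_mem_of_adjoin_eq_center (hχ : IsCentralCharacter S χ) (hψ : IsCentralCharacter T ψ)
    {I : Ideal R} {Z : Set A} (hZ : Algebra.adjoin R Z = Subalgebra.center R A)
    (hI : ∀ z ∈ Z, χ z - ψ z ∈ I) {z : A} (hz : z ∈ Set.center A) : χ z - ψ z ∈ I := by
  have hZc : Z ⊆ Set.center A := fun y hy ↦
    (hZ ▸ Algebra.subset_adjoin hy : y ∈ Subalgebra.center R A)
  have hz' : (Algebra.TensorProduct.includeRight z : FractionRing R ⊗[R] A) ∈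
      Algebra.adjoin R (Algebra.TensorProduct.includeRight '' Z) := by
    rw [← AlgHom.map_adjoin, hZ]
    exact ⟨z, hz, rfl⟩
  obtain ⟨c, d, hc, hd, hcd⟩ := ActsAsScalar.exists_sub_mem_of_mem_adjoin (S := S) (T := T)
    (I := I) (by
      rintro _ ⟨y, hy, rfl⟩
      exact ⟨χ y, ψ y, hχ y (hZc hy), hψ y (hZc hy), hI y hy⟩) hz'
  rwa [(hχ z hz).unique (FractionRing R) hc, (hψ z hz).unique (FractionRing R) hd]

end IsCentralCharacter

theorem stmt12_general (R : Type u) [CommRing R] [IsDomain R] [IsIntegrallyClosed R]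
    (A : Type u) [Ring A] [Algebra R A] [Module.Finite R A] [Module.IsTorsionFree R A]
    (hsplit : IsSplitAlgebra (FractionRing R) (FractionRing R ⊗[R] A))
    (S T : Type*) [AddCommGroup S] [Module (FractionRing R ⊗[R] A) S] [Nontrivial S]
    [AddCommGroup T] [Module (FractionRing R ⊗[R] A) T] [Nontrivial T]
    (ΩS ΩT : A → R) (hΩS : IsCentralCharacter S ΩS) (hΩT : IsCentralCharacter T ΩT) :
    (∀ p : PrimeSpectrum R,
      (∃ e, IsBlockIdemOn (localizedAt R A p) e ∧ (∀ s : S, e • s = s) ∧ (∀ t : T, e • t = t)) ↔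
        ∀ z ∈ Set.center A, ΩS z - ΩT z ∈ p.asIdeal) ∧
    ∀ Z : Set A, Algebra.adjoin R Z = Subalgebra.center R A →
      {p : PrimeSpectrum R | ∃ e, IsBlockIdemOn (localizedAt R A p) e ∧
          (∀ s : S, e • s = s) ∧ (∀ t : T, e • t = t)} =
        PrimeSpectrum.zeroLocus ((fun z ↦ ΩS z - ΩT z) '' Z) := by
  have same_block_iff (p : PrimeSpectrum R) :
      (∃ e, IsBlockIdemOn (localizedAt R A p) e ∧ (∀ s : S, e • s = s) ∧ ∀ t : T, e • t = t) ↔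
        ∀ z ∈ Set.center A, ΩS z - ΩT z ∈ p.asIdeal :=
    ⟨fun ⟨_, he, heS, heT⟩ _ ↦ hΩS.sub_mem_of_isBlockIdemOn hsplit hΩT he heS heT,
      hΩS.exists_isBlockIdemOn_of_sub_mem hΩT⟩
  refine ⟨same_block_iff, fun Z hZ ↦ Set.ext fun p ↦ ?_⟩
  rw [Set.mem_ofPred_eq, same_block_iff, PrimeSpectrum.mem_zeroLocus, Set.image_subset_iff]
  exact ⟨fun h z hz ↦ h z (hZ ▸ Algebra.subset_adjoin hz : z ∈ Subalgebra.center R A),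
    fun h _ ↦ hΩS.sub_mem_of_adjoin_eq_center hΩT hZ h⟩

/-- **Theorem `maintheorem_blex_descr`.** Let `R` be a noetherian normal domain and `A` a finite
flat `R`-algebra with split generic fiber. Let `S`, `T` be simple `A^K`-modules with central
characters `Ω_S`, `Ω_T`, whose restrictions to `Z(A)` take values `Ω'_S, Ω'_T` in `R`. Then `S`
and `T` lie in the same `p`-family iff `Ω'_S ≡ Ω'_T mod p` on `Z(A)`; consequently, if
`z 0, …, z (n-1)` generate `Z(A)` as an `R`-algebra and `S`, `T` lie in distinct blocks of `A^K`,
the gluing locus is the zero locus of the differences `Ω'_S(z i) - Ω'_T(z i)`. -/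
theorem stmt12 (R : Type u) [CommRing R] [IsDomain R] [IsNoetherianRing R] [IsIntegrallyClosed R]
    (A : Type u) [Ring A] [Algebra R A] [Module.Finite R A] [Module.Flat R A]
    (hsplit : IsSplitAlgebra (FractionRing R) (FractionRing R ⊗[R] A))
    (S T : Type u) [AddCommGroup S] [Module (FractionRing R ⊗[R] A) S]
    [AddCommGroup T] [Module (FractionRing R ⊗[R] A) T]
    (hS : IsSimpleModule (FractionRing R ⊗[R] A) S)
    (hT : IsSimpleModule (FractionRing R ⊗[R] A) T)
    (ΩS ΩT : A → R)
    (hΩS : ∀ z ∈ Set.center A, ∀ s : S,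
      (Algebra.TensorProduct.includeRight z : FractionRing R ⊗[R] A) • s =
        algebraMap R (FractionRing R ⊗[R] A) (ΩS z) • s)
    (hΩT : ∀ z ∈ Set.center A, ∀ t : T,
      (Algebra.TensorProduct.includeRight z : FractionRing R ⊗[R] A) • t =
        algebraMap R (FractionRing R ⊗[R] A) (ΩT z) • t) :
    (∀ p : PrimeSpectrum R,
      (∃ e, IsBlockIdemOn (localizedAt R A p) e ∧ (∀ s : S, e • s = s) ∧ (∀ t : T, e • t = t)) ↔
        ∀ z ∈ Set.center A, ΩS z - ΩT z ∈ p.asIdeal) ∧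
    (¬ (∃ e : FractionRing R ⊗[R] A, IsBlockIdem e ∧
          (∀ s : S, e • s = s) ∧ (∀ t : T, e • t = t)) →
      ∀ (n : ℕ) (z : Fin n → A), (∀ i, z i ∈ Set.center A) →
        Algebra.adjoin R (Set.range z) = Subalgebra.center R A →
        {p : PrimeSpectrum R | ∃ e, IsBlockIdemOn (localizedAt R A p) e ∧
            (∀ s : S, e • s = s) ∧ (∀ t : T, e • t = t)} =
          PrimeSpectrum.zeroLocus (Set.range fun i => ΩS (z i) - ΩT (z i))) := by
  have : Nontrivial S := hS.nontrivial
  have : Nontrivial T := hT.nontrivial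
  have general := stmt12_general R A hsplit S T ΩS ΩT hΩS hΩT
  exact ⟨general.1, fun _ _ z _ hz ↦ by rw [general.2 _ hz, ← Set.range_comp]; rfl⟩
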